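/- If C is a co-Boolean category, then every object of C is projection-coextensive. -/

import Mathlib

open CategoryTheory CategoryTheory.Limits

universe v u

variable {C : Type u} [Category.{v} C]

/-- `(p, q)` is a binary product diagram, exhibiting `X` as the product of `A` and `B`. -/
def IsBinaryProduct {X A B : C} (p : X ⟶ A) (q : X ⟶ B) : Prop :=
  Nonempty (IsLimit (BinaryFan.mk p q))

/-- `p : X ⟶ A` is a product projection. -/
def IsProductProjection {X A : C} (p : X ⟶ A) : Prop :=
  ∃ (B : C) (q : X ⟶ B), IsBinaryProduct p q

/-- A pushout square whose two legs belong to the class `M`. -/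
def IsMPushout (M : MorphismProperty C) {Z A B P : C}
    (f : Z ⟶ A) (g : Z ⟶ B) (a : A ⟶ P) (b : B ⟶ P) : Prop :=
  IsPushout f g a b ∧ M a ∧ M b

/-- `X` is an `M`-coextensive object. -/
structure MCoextensive (M : MorphismProperty C) (X : C) : Prop where
  pushout_exists : ∀ ⦃Y A : C⦄ (m : X ⟶ Y) (p : X ⟶ A), M m → IsProductProjection p →
    ∃ (P : C) (a : A ⟶ P) (b : Y ⟶ P), IsMPushout M p m a b
  isBinaryProduct_iff : ∀ ⦃A₁ A₂ Y B₁ B₂ : C⦄ (π₁ : X ⟶ A₁) (π₂ : X ⟶ A₂)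
    (f : X ⟶ Y) (p₁ : A₁ ⟶ B₁) (p₂ : A₂ ⟶ B₂) (π₁' : Y ⟶ B₁) (π₂' : Y ⟶ B₂),
    IsBinaryProduct π₁ π₂ → M f → M p₁ → M p₂ →
    π₁ ≫ p₁ = f ≫ π₁' → π₂ ≫ p₂ = f ≫ π₂' →
    (IsBinaryProduct π₁' π₂' ↔ (IsMPushout M π₁ f p₁ π₁' ∧ IsMPushout M π₂ f p₂ π₂'))

/-- The class of product projections. -/
def projections (C : Type u) [Category.{v} C] : MorphismProperty C :=
  fun _ _ f => IsProductProjection f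

/-- `X` is projection-coextensive. -/
def ProjectionCoextensive (X : C) : Prop := MCoextensive (projections C) X

/-- `f` is a regular epimorphism (a coequalizer of some parallel pair). -/
def IsRegularEpimorphism {X Y : C} (f : X ⟶ Y) : Prop :=
  ∃ (W : C) (a b : W ⟶ X) (h : a ≫ f = b ≫ f), Nonempty (IsColimit (Cofork.ofπ f h))

/-- The class of regular epimorphisms. -/
def regularEpis (C : Type u) [Category.{v} C] : MorphismProperty C :=
  fun _ _ f => IsRegularEpimorphism f

/-- `X` is regularly-coextensive. -/
def RegularlyCoextensive (X : C) : Prop := MCoextensive (regularEpis C) X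

/-- A regular category: finitely complete, coequalizers of kernel pairs, and
regular epimorphisms are stable under pullback. -/
class IsRegularCategory (C : Type u) [Category.{v} C] [HasFiniteLimits C] : Prop where
  hasCoequalizer_kernelPair : ∀ {X Y : C} (f : X ⟶ Y),
    HasCoequalizer (pullback.fst f f) (pullback.snd f f)
  regularEpi_stable : ∀ {X Y Z : C} (f : X ⟶ Y) (g : Z ⟶ Y),
    IsRegularEpimorphism f → IsRegularEpimorphism (pullback.snd f g)

/-- `X` has global support: the unique morphism to the terminal object is a regular epi. -/
def HasGlobalSupport [HasTerminal C] (X : C) : Prop :=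
  IsRegularEpimorphism (terminal.from X)

/-- A co-Boolean category: pushouts of product projections along arbitrary morphisms
exist and are product projections, product projections push out binary product
diagrams to binary product diagrams, and the only objects whose diagonal pair of
identities is a binary product diagram are the terminal ones. -/
structure CoBoolean (C : Type u) [Category.{v} C] [HasFiniteProducts C] : Prop where
  pushout_exists : ∀ ⦃X A Y : C⦄ (p : X ⟶ A) (f : X ⟶ Y), IsProductProjection p →
    ∃ (P : C) (a : A ⟶ P) (q : Y ⟶ P), IsPushout p f a q ∧ IsProductProjection q
  pushout_prod : ∀ ⦃X A₁ A₂ Y B₁ B₂ : C⦄ (π₁ : X ⟶ A₁) (π₂ : X ⟶ A₂) (f : X ⟶ Y)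
    (p₁ : A₁ ⟶ B₁) (p₂ : A₂ ⟶ B₂) (π₁' : Y ⟶ B₁) (π₂' : Y ⟶ B₂),
    IsBinaryProduct π₁ π₂ → IsProductProjection f →
    IsPushout π₁ f p₁ π₁' → IsPushout π₂ f p₂ π₂' → IsBinaryProduct π₁' π₂'
  terminal_of_diag : ∀ (X : C), IsBinaryProduct (𝟙 X) (𝟙 X) → Nonempty (IsTerminal X)

/-!
Projections in a co-Boolean category are epimorphisms: pushing a product diagram `(p, q)` out along
`p` makes a coprojection `b` of the cokernel pair of `p` a product projection, and `b` is split by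
the codiagonal, so it is invertible. Repeatedly pushing `(p, q)` out along projections then produces
the diagram `(𝟙 P, 𝟙 P)` on the pushout `P` of `p` and `q`, so `P` is terminal.

Let `Y` have the product diagrams `(y₁, y₂)` and `(y₁ ≫ q₁, y₂ ≫ q₂)`. Pushing the second out along
`y₁` gives a product diagram `(q₁, t)` on the codomain of `y₁`. The projection `t` factors through
the pushout of `y₁` and `y₂`, which is terminal, so `q₁` is invertible. Applied to the comparison
morphisms out of the pushouts, this shows that both squares from a product diagram to another
one, over a projection `f : X ⟶ Y`, are pushouts.
-/

theorem epi_of_isPushout_self_of_isIso_inr {X A P : C} {p : X ⟶ A} {a b : A ⟶ P}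
    (h : IsPushout p p a b) [IsIso b] : Epi p := by
  obtain ⟨n, han, hbn⟩ : ∃ n : P ⟶ A, a ≫ n = 𝟙 A ∧ b ≫ n = 𝟙 A :=
    ⟨h.desc (𝟙 A) (𝟙 A) rfl, h.inl_desc _ _ _, h.inr_desc _ _ _⟩
  have : IsIso n := IsIso.of_isIso_fac_left hbn
  have hab : a = b := (cancel_mono n).1 (han.trans hbn.symm)
  refine ⟨fun g k hgk => ?_⟩
  calc g = a ≫ h.desc g k hgk := (h.inl_desc g k hgk).symm
    _ = b ≫ h.desc g k hgk := congrArg (· ≫ h.desc g k hgk) hab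
    _ = k := h.inr_desc g k hgk

namespace IsBinaryProduct

variable {X A B : C} {p : X ⟶ A} {q : X ⟶ B}

theorem symm (h : IsBinaryProduct p q) : IsBinaryProduct q p :=
  h.map BinaryFan.isLimitFlip

theorem isProductProjection_fst (h : IsBinaryProduct p q) : IsProductProjection p :=
  ⟨B, q, h⟩

theorem isProductProjection_snd (h : IsBinaryProduct p q) : IsProductProjection q :=
  h.symm.isProductProjection_fst

theorem isSplitEpi_fst (h : IsBinaryProduct p q) (r : A ⟶ B) : IsSplitEpi p := by
  obtain ⟨hl⟩ := h
  obtain ⟨s, hs, -⟩ := BinaryFan.IsLimit.lift' hl (𝟙 A) r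
  exact ⟨⟨s, hs⟩⟩

theorem isIso_fst_of_isTerminal_fac (h : IsBinaryProduct p q) {T : C} (hT : IsTerminal T)
    {s : X ⟶ T} {d : T ⟶ B} (hd : s ≫ d = q) : IsIso p := by
  have := h.isSplitEpi_fst (hT.from A ≫ d)
  obtain ⟨hl⟩ := h
  have : Mono p := ⟨fun g k hgk => BinaryFan.IsLimit.hom_ext hl hgk <| by
    change g ≫ q = k ≫ q
    rw [← hd, ← Category.assoc, ← Category.assoc, hT.hom_ext (g ≫ s) (k ≫ s)]⟩
  exact isIso_of_mono_of_isSplitEpi p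

end IsBinaryProduct

theorem IsProductProjection.comp_isIso {X A A' : C} {p : X ⟶ A} (hp : IsProductProjection p)
    (e : A ⟶ A') [IsIso e] : IsProductProjection (p ≫ e) := by
  obtain ⟨B, q, ⟨hl⟩⟩ := hp
  exact ⟨B, q, ⟨BinaryFan.isLimitCompLeftIso _ e hl⟩⟩

namespace CoBoolean

variable [HasFiniteProducts C]

theorem isProductProjection_inr_of_isPushout (hC : CoBoolean C) {X A Y P : C} {p : X ⟶ A}
    {f : X ⟶ Y} {a : A ⟶ P} {b : Y ⟶ P} (h : IsPushout p f a b) (hp : IsProductProjection p) :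
    IsProductProjection b := by
  obtain ⟨P', a', b', h', hb'⟩ := hC.pushout_exists p f hp
  rw [← IsPushout.inr_isoIsPushout_hom _ _ h' h]
  exact hb'.comp_isIso _

theorem epi_of_isProductProjection (hC : CoBoolean C) {X A : C} {p : X ⟶ A}
    (hp : IsProductProjection p) : Epi p := by
  obtain ⟨B, q, hpq⟩ := hp
  obtain ⟨P, a, b, hP, -⟩ := hC.pushout_exists p p hpq.isProductProjection_fst
  obtain ⟨R, s, r, hR, -⟩ := hC.pushout_exists q p hpq.isProductProjection_snd
  have hbr : IsBinaryProduct b r :=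
    hC.pushout_prod _ _ _ _ _ _ _ hpq hpq.isProductProjection_fst hP hR
  let codiag : P ⟶ A := hP.desc (𝟙 A) (𝟙 A) rfl
  have : IsSplitMono b := ⟨⟨codiag, hP.inr_desc _ _ _⟩⟩
  have : IsSplitEpi b := hbr.isSplitEpi_fst (codiag ≫ r)
  have : IsIso b := isIso_of_mono_of_isSplitEpi b
  exact epi_of_isPushout_self_of_isIso_inr hP

theorem nonempty_isTerminal_of_isPushout (hC : CoBoolean C) {X A B P : C} {p : X ⟶ A}
    {q : X ⟶ B} {a : A ⟶ P} {b : B ⟶ P} (hpq : IsBinaryProduct p q) (hP : IsPushout p q a b) :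
    Nonempty (IsTerminal P) := by
  have hp := hpq.isProductProjection_fst
  have := hC.epi_of_isProductProjection hp
  have h_id_a : IsBinaryProduct (𝟙 A) a :=
    hC.pushout_prod _ _ p _ _ _ _ hpq hp (.of_horiz_isIso_epi ⟨rfl⟩) hP.flip
  have ha := h_id_a.isProductProjection_snd
  have := hC.epi_of_isProductProjection ha
  exact hC.terminal_of_diag P <|
    hC.pushout_prod _ _ a _ _ _ _ h_id_a ha (.id_horiz a) (.of_horiz_isIso_epi ⟨rfl⟩)

theorem isIso_of_isBinaryProduct_comp (hC : CoBoolean C) {Y Q₁ Q₂ B₁ B₂ : C}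
    {y₁ : Y ⟶ Q₁} {y₂ : Y ⟶ Q₂} {q₁ : Q₁ ⟶ B₁} {q₂ : Q₂ ⟶ B₂} (hy : IsBinaryProduct y₁ y₂)
    (hyq : IsBinaryProduct (y₁ ≫ q₁) (y₂ ≫ q₂)) : IsIso q₁ := by
  have hy₁ := hy.isProductProjection_fst
  have := hC.epi_of_isProductProjection hy₁
  obtain ⟨T, c, t, hT, -⟩ := hC.pushout_exists (y₂ ≫ q₂) y₁ hyq.isProductProjection_snd
  have hqt : IsBinaryProduct q₁ t :=
    hC.pushout_prod _ _ y₁ _ _ _ _ hyq hy₁ (.of_vert_isIso_epi ⟨Category.comp_id _⟩) hT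
  obtain ⟨R, r, s, hR, -⟩ := hC.pushout_exists y₁ y₂ hy₁
  obtain ⟨hRterm⟩ := hC.nonempty_isTerminal_of_isPushout hy hR
  have ht : y₁ ≫ t = y₂ ≫ q₂ ≫ c := by rw [← hT.w, Category.assoc]
  exact hqt.isIso_fst_of_isTerminal_fac hRterm (hR.inl_desc _ _ ht)

section Squares

variable {X A₁ A₂ Y B₁ B₂ : C} {π₁ : X ⟶ A₁} {π₂ : X ⟶ A₂} {f : X ⟶ Y}
  {p₁ : A₁ ⟶ B₁} {p₂ : A₂ ⟶ B₂} {π₁' : Y ⟶ B₁} {π₂' : Y ⟶ B₂}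

theorem isPushout_of_isBinaryProduct (hC : CoBoolean C) (hπ : IsBinaryProduct π₁ π₂)
    (hπ' : IsBinaryProduct π₁' π₂') (hf : IsProductProjection f)
    (w₁ : π₁ ≫ p₁ = f ≫ π₁') (w₂ : π₂ ≫ p₂ = f ≫ π₂') : IsPushout π₁ f p₁ π₁' := by
  obtain ⟨Q₁, a₁, y₁, hQ₁, -⟩ := hC.pushout_exists π₁ f hπ.isProductProjection_fst
  obtain ⟨Q₂, a₂, y₂, hQ₂, -⟩ := hC.pushout_exists π₂ f hπ.isProductProjection_snd
  have hy : IsBinaryProduct y₁ y₂ := hC.pushout_prod _ _ _ _ _ _ _ hπ hf hQ₁ hQ₂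
  have hyq : IsBinaryProduct (y₁ ≫ hQ₁.desc p₁ π₁' w₁) (y₂ ≫ hQ₂.desc p₂ π₂' w₂) := by
    rwa [hQ₁.inr_desc, hQ₂.inr_desc]
  have := hC.isIso_of_isBinaryProduct_comp hy hyq
  exact hQ₁.of_iso (Iso.refl _) (Iso.refl _) (Iso.refl _) (asIso (hQ₁.desc p₁ π₁' w₁))
    (by simp) (by simp) (by simp) (by simp)

theorem isBinaryProduct_iff_isPushout (hC : CoBoolean C) (hπ : IsBinaryProduct π₁ π₂)
    (hf : IsProductProjection f) (w₁ : π₁ ≫ p₁ = f ≫ π₁') (w₂ : π₂ ≫ p₂ = f ≫ π₂') :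
    IsBinaryProduct π₁' π₂' ↔ IsPushout π₁ f p₁ π₁' ∧ IsPushout π₂ f p₂ π₂' :=
  ⟨fun hπ' => ⟨hC.isPushout_of_isBinaryProduct hπ hπ' hf w₁ w₂,
      hC.isPushout_of_isBinaryProduct hπ.symm hπ'.symm hf w₂ w₁⟩,
    fun ⟨h₁, h₂⟩ => hC.pushout_prod _ _ _ _ _ _ _ hπ hf h₁ h₂⟩

end Squares

end CoBoolean

/-- Every object of a co-Boolean category is projection-coextensive. -/
theorem coBoolean_projectionCoextensive
    {C : Type u} [Category.{v} C] [HasFiniteProducts C]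
    (hC : CoBoolean C) (X : C) : ProjectionCoextensive X := by
  constructor
  · intro Y A m p hm hp
    obtain ⟨P, a, b, hP, hb⟩ := hC.pushout_exists p m hp
    exact ⟨P, a, b, hP, hC.isProductProjection_inr_of_isPushout hP.flip hm, hb⟩
  · intro A₁ A₂ Y B₁ B₂ π₁ π₂ f p₁ p₂ π₁' π₂' hπ hf hp₁ hp₂ w₁ w₂
    have hiff := hC.isBinaryProduct_iff_isPushout hπ hf w₁ w₂
    refine ⟨fun hπ' => ?_, fun ⟨h₁, h₂⟩ => hiff.2 ⟨h₁.1, h₂.1⟩⟩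
    obtain ⟨h₁, h₂⟩ := hiff.1 hπ'
    exact ⟨⟨h₁, hp₁, hπ'.isProductProjection_fst⟩, h₂, hp₂, hπ'.isProductProjection_snd⟩
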